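/- arXiv:2003.04703 — 4 statements merged into one kernel-verified Lean document; each statement's English description precedes it below -/
import Mathlib

section
/- (Fixpoint characterization.) For an n×n matrix A and vectors b, x over the extended reals ℝ̄ with max-plus operations, the inequality x ≥ A ⊗ x ⊕ b holds if and only if x ≥ A* ⊗ b and x = A* ⊗ x. -/
noncomputable section

/-- Max-plus matrix product over the extended reals (`-∞` is absorbing for `+` in `EReal`). -/
def mpMul {m n p : ℕ} (A : Matrix (Fin m) (Fin n) EReal) (B : Matrix (Fin n) (Fin p) EReal) :
    Matrix (Fin m) (Fin p) EReal :=
  fun i j => ⨆ k, A i k + B k j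

/-- Max-plus matrix-vector product. -/
def mpMulVec {m n : ℕ} (A : Matrix (Fin m) (Fin n) EReal) (x : Fin n → EReal) :
    Fin m → EReal :=
  fun i => ⨆ k, A i k + x k

/-- Min-plus addition on `EReal`: `+∞` is absorbing. -/
def mnAdd (a b : EReal) : EReal := -((-a) + (-b))

/-- Min-plus matrix product. -/
def mnMul {m n p : ℕ} (A : Matrix (Fin m) (Fin n) EReal) (B : Matrix (Fin n) (Fin p) EReal) :
    Matrix (Fin m) (Fin p) EReal :=
  fun i j => ⨅ k, mnAdd (A i k) (B k j)

/-- Min-plus matrix-vector product. -/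
def mnMulVec {m n : ℕ} (A : Matrix (Fin m) (Fin n) EReal) (x : Fin n → EReal) :
    Fin m → EReal :=
  fun i => ⨅ k, mnAdd (A i k) (x k)

/-- Conjugate matrix: `(conj A) i j = -(A j i)`. -/
def conjM {m n : ℕ} (A : Matrix (Fin m) (Fin n) EReal) : Matrix (Fin n) (Fin m) EReal :=
  fun i j => -(A j i)

/-- Max-plus identity matrix. -/
def mpId (n : ℕ) : Matrix (Fin n) (Fin n) EReal :=
  fun i j => if i = j then 0 else ⊥

/-- Min-plus identity matrix. -/
def mnId (n : ℕ) : Matrix (Fin n) (Fin n) EReal :=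
  fun i j => if i = j then 0 else ⊤

/-- Max-plus matrix powers. -/
def mpPow {n : ℕ} (A : Matrix (Fin n) (Fin n) EReal) : ℕ → Matrix (Fin n) (Fin n) EReal
  | 0 => mpId n
  | k + 1 => mpMul A (mpPow A k)

/-- Min-plus matrix powers. -/
def mnPow {n : ℕ} (A : Matrix (Fin n) (Fin n) EReal) : ℕ → Matrix (Fin n) (Fin n) EReal
  | 0 => mnId n
  | k + 1 => mnMul A (mnPow A k)

/-- Max-plus Kleene star: entrywise supremum of all max-plus powers. -/
def mpStar {n : ℕ} (A : Matrix (Fin n) (Fin n) EReal) : Matrix (Fin n) (Fin n) EReal :=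
  fun i j => ⨆ k, mpPow A k i j

/-- Min-plus star: entrywise infimum of all min-plus powers. -/
def mnStar {n : ℕ} (A : Matrix (Fin n) (Fin n) EReal) : Matrix (Fin n) (Fin n) EReal :=
  fun i j => ⨅ k, mnPow A k i j

/-- Entrywise maximum of two matrices (`A ⊕ B`). -/
def mSup {m n : ℕ} (A B : Matrix (Fin m) (Fin n) EReal) : Matrix (Fin m) (Fin n) EReal :=
  fun i j => A i j ⊔ B i j

/-!
Each row of a max-plus product is a supremum of sums, and addition on `EReal` distributes over
arbitrary suprema, so `A* ⊗ x` is the supremum of the iterates of the monotone map `y ↦ A ⊗ y` at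
`x`. The iterates `0` and `1` give `x ≤ A* ⊗ x` and `A ⊗ x ≤ A* ⊗ x`; if `A ⊗ x ≤ x`, the iterates
decrease and `A* ⊗ x ≤ x`. Hence `x = A* ⊗ x` says exactly `A ⊗ x ≤ x`, and for such `x` the bounds
`b ≤ x` and `A* ⊗ b ≤ x` are equivalent because `A* ⊗ b ≤ A* ⊗ x = x`.
-/

/-- Because `⊥` absorbs in `+` while `⊤` absorbs in `mnAdd`, this holds at infinite values too,
unlike the corresponding statement for subtraction. -/
theorem gc_add_mnAdd_neg (c : EReal) : GaloisConnection (· + c) (mnAdd · (-c)) := by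
  intro a d
  change a + c ≤ d ↔ a ≤ mnAdd d (-c)
  induction c with
  | bot => simp [mnAdd]
  | coe c =>
    rw [mnAdd, neg_neg, EReal.neg_add (by simp) (by simp), neg_neg,
      EReal.le_sub_iff_add_le (by simp) (by simp)]
  | top => induction a <;> induction d <;> simp [mnAdd]

instance instIsAddQuantaleEReal : IsAddQuantale EReal where
  add_sSup_distrib c s := by simpa only [add_comm c] using (gc_add_mnAdd_neg c).l_sSup
  sSup_add_distrib _ c := (gc_add_mnAdd_neg c).l_sSup

theorem mpMulVec_mono {m n : ℕ} (A : Matrix (Fin m) (Fin n) EReal) : Monotone (mpMulVec A) :=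
  fun _ _ hxy _ => iSup_mono fun k => add_le_add_right (hxy k) _

theorem mpMulVec_mpMul {m n p : ℕ} (A : Matrix (Fin m) (Fin n) EReal)
    (B : Matrix (Fin n) (Fin p) EReal) (x : Fin p → EReal) :
    mpMulVec (mpMul A B) x = mpMulVec A (mpMulVec B x) := by
  ext i
  calc ⨆ j, (⨆ k, A i k + B k j) + x j
      = ⨆ j, ⨆ k, A i k + (B k j + x j) := by
        simp only [AddQuantale.iSup_add_distrib, add_assoc]
    _ = ⨆ k, ⨆ j, A i k + (B k j + x j) := iSup_comm
    _ = ⨆ k, A i k + ⨆ j, B k j + x j := by simp only [AddQuantale.add_iSup_distrib]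

theorem mpMulVec_mpId {n : ℕ} (x : Fin n → EReal) : mpMulVec (mpId n) x = x := by
  ext i
  simp only [mpMulVec, mpId, ite_add, zero_add, EReal.bot_add, iSup_ite, iSup_bot, sup_bot_eq,
    iSup_iSup_eq_right]

section KleeneStar

variable {n : ℕ} (A : Matrix (Fin n) (Fin n) EReal) (x : Fin n → EReal)

theorem mpMulVec_mpPow (k : ℕ) : mpMulVec (mpPow A k) x = (mpMulVec A)^[k] x := by
  induction k with
  | zero => exact mpMulVec_mpId x
  | succ k ih => rw [mpPow, mpMulVec_mpMul, ih, Function.iterate_succ_apply']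

theorem mpMulVec_mpStar : mpMulVec (mpStar A) x = ⨆ k, (mpMulVec A)^[k] x := by
  ext i
  calc ⨆ j, (⨆ k, mpPow A k i j) + x j
      = ⨆ j, ⨆ k, mpPow A k i j + x j := by simp only [AddQuantale.iSup_add_distrib]
    _ = ⨆ k, mpMulVec (mpPow A k) x i := iSup_comm
    _ = (⨆ k, (mpMulVec A)^[k] x) i := by simp only [mpMulVec_mpPow, iSup_apply]

theorem mpMulVec_iterate_le_mpMulVec_mpStar (k : ℕ) :
    (mpMulVec A)^[k] x ≤ mpMulVec (mpStar A) x := by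
  rw [mpMulVec_mpStar]
  exact le_iSup (fun l => (mpMulVec A)^[l] x) k

theorem le_mpMulVec_mpStar : x ≤ mpMulVec (mpStar A) x :=
  mpMulVec_iterate_le_mpMulVec_mpStar A x 0

variable {A x}

theorem mpMulVec_mpStar_le (h : mpMulVec A x ≤ x) : mpMulVec (mpStar A) x ≤ x := by
  rw [mpMulVec_mpStar]
  exact iSup_le fun k => (mpMulVec_mono A).antitone_iterate_of_map_le h k.zero_le

theorem eq_mpMulVec_mpStar_iff : x = mpMulVec (mpStar A) x ↔ mpMulVec A x ≤ x where
  mp h := (mpMulVec_iterate_le_mpMulVec_mpStar A x 1).trans_eq h.symm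
  mpr h := (le_mpMulVec_mpStar A x).antisymm (mpMulVec_mpStar_le h)

end KleeneStar

/-- fixpoint characterization:
`x ≥ A ⊗ x ⊕ b ↔ (x ≥ A* ⊗ b ∧ x = A* ⊗ x)`. -/
theorem fixpoint_iff {n : ℕ} (A : Matrix (Fin n) (Fin n) EReal) (b x : Fin n → EReal) :
    mpMulVec A x ⊔ b ≤ x ↔ (mpMulVec (mpStar A) b ≤ x ∧ x = mpMulVec (mpStar A) x) := by
  rw [sup_le_iff, and_comm, ← eq_mpMulVec_mpStar_iff]
  refine and_congr_left fun hx => ⟨fun hb => ?_, (le_mpMulVec_mpStar A b).trans⟩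
  calc mpMulVec (mpStar A) b ≤ mpMulVec (mpStar A) x := mpMulVec_mono _ hb
    _ = x := hx.symm
end
end

section
/- Let 𝒜 and ℬ be n×n matrices over the extended reals ℝ̄. If a sequence x : ℕ → ℝ̄^n satisfies 𝒜 ⊗ x(k-1) ≤ x(k) ≤ ℬ ⊗' x(k-1) for all k ≥ 1, then for every n ≥ 1 the inequality (ℬ^♯)^n ⊗ 𝒜^n ⊗ x(0) ≤ x(0) holds, where (ℬ^♯)^n and 𝒜^n denote max-plus matrix powers. -/
noncomputable section

/-!
Max-plus addition is residuated by min-plus addition, infinite values included, so `ℬ^♯ ⊗ ·` is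
left adjoint to `ℬ ⊗' ·`, and the same holds for their `m`-th iterates. The hypotheses give
`𝒜^m ⊗ x(0) ≤ x(m)`, and `x(m)` is at most the `m`-th iterate of `ℬ ⊗' ·` at `x(0)`; the adjunction
moves that iterate to the left-hand side as `(ℬ^♯)^m`.
-/

theorem galoisConnection_iterate {α : Type*} [Preorder α] {l u : α → α}
    (gc : GaloisConnection l u) (m : ℕ) : GaloisConnection l^[m] u^[m] := by
  induction m with
  | zero => exact GaloisConnection.id
  | succ m ih =>
    rw [Function.iterate_succ, Function.iterate_succ']
    exact gc.compose ih

theorem iterate_iterate_le_of_succ_bounds {α : Type*} [Preorder α] {f l u : α → α} {x : ℕ → α}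
    (hf : Monotone f) (gc : GaloisConnection l u) (hfx : ∀ k, f (x k) ≤ x (k + 1))
    (hxu : ∀ k, x (k + 1) ≤ u (x k)) (m : ℕ) : l^[m] (f^[m] (x 0)) ≤ x 0 := by
  have lower : f^[m] (x 0) ≤ x m := by
    simpa [Nat.succ_iterate] using hf.iterate_comp_le_of_le (g := Nat.succ) hfx m 0
  have upper : x m ≤ u^[m] (x 0) := by
    simpa [Nat.succ_iterate] using gc.monotone_u.le_iterate_comp_of_le (g := Nat.succ) hxu m 0
  exact (galoisConnection_iterate gc m).l_le (lower.trans upper)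

theorem galoisConnection_neg_add_mnAdd (a : EReal) : GaloisConnection (-a + ·) (mnAdd a) := by
  intro b c
  -- `s ≤ t ↔ s - t ≤ 0` is valid on all of `EReal`, so residuation reduces to regrouping a sum.
  calc -a + b ≤ c ↔ -a + b - c ≤ 0 := EReal.sub_nonpos.symm
    _ ↔ b - mnAdd a c ≤ 0 := by
      rw [mnAdd, sub_eq_add_neg, sub_eq_add_neg, neg_neg, add_comm (-a) b, add_assoc]
    _ ↔ b ≤ mnAdd a c := EReal.sub_nonpos

theorem ereal_add_iSup {ι : Sort*} (a : EReal) (f : ι → EReal) : a + ⨆ i, f i = ⨆ i, a + f i := by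
  simpa only [neg_neg] using (galoisConnection_neg_add_mnAdd (-a)).l_iSup (f := f)

theorem ereal_iSup_add {ι : Sort*} (f : ι → EReal) (a : EReal) :
    (⨆ i, f i) + a = ⨆ i, f i + a := by
  simp only [add_comm _ a, ereal_add_iSup]

theorem mpMulVec_mpPow_s10 {n : ℕ} (A : Matrix (Fin n) (Fin n) EReal) (m : ℕ) :
    mpMulVec (mpPow A m) = (mpMulVec A)^[m] := by
  induction m with
  | zero => exact funext mpMulVec_mpId
  | succ m ih =>
    funext x
    rw [mpPow, mpMulVec_mpMul, ih, Function.iterate_succ_apply']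

theorem galoisConnection_mpMulVec_conjM_mnMulVec {m n : ℕ} (B : Matrix (Fin m) (Fin n) EReal) :
    GaloisConnection (mpMulVec (conjM B)) (mnMulVec B) := by
  intro y z
  calc mpMulVec (conjM B) y ≤ z ↔ ∀ j i, -B i j + y i ≤ z j := by
        simp only [Pi.le_def, mpMulVec, conjM, iSup_le_iff]
    _ ↔ ∀ i j, -B i j + y i ≤ z j := forall_comm
    _ ↔ ∀ i j, y i ≤ mnAdd (B i j) (z j) :=
        forall₂_congr fun i j => galoisConnection_neg_add_mnAdd (B i j) (y i) (z j)
    _ ↔ y ≤ mnMulVec B z := by simp only [Pi.le_def, mnMulVec, le_iInf_iff]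

/-- necessary condition `(ℬ^♯)^m ⊗ 𝒜^m ⊗ x(0) ≤ x(0)` for all `m ≥ 1`. -/
theorem necessary_power_condition {n : ℕ} (𝒜 ℬ : Matrix (Fin n) (Fin n) EReal)
    (x : ℕ → Fin n → EReal)
    (hx : ∀ k : ℕ, 1 ≤ k →
        mpMulVec 𝒜 (x (k - 1)) ≤ x k ∧ x k ≤ mnMulVec ℬ (x (k - 1))) :
    ∀ m : ℕ, 1 ≤ m →
      mpMulVec (mpMul (mpPow (conjM ℬ) m) (mpPow 𝒜 m)) (x 0) ≤ x 0 := by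
  intro m _
  rw [mpMulVec_mpMul, mpMulVec_mpPow_s10, mpMulVec_mpPow_s10]
  exact iterate_iterate_le_of_succ_bounds (mpMulVec_mono 𝒜)
    (galoisConnection_mpMulVec_conjM_mnMulVec ℬ)
    (fun k => (hx (k + 1) k.succ_pos).1) (fun k => (hx (k + 1) k.succ_pos).2) m
end
end

section
/- Let 𝒜 and ℬ be m×n matrices over the extended reals ℝ̄. If there exists a vector x ∈ ℝ^n all of whose entries are real numbers such that 𝒜 ⊗ x ≤ ℬ ⊗' x, then 𝒜_{ij} ≤ ℬ_{ij} for all indices i, j. -/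
noncomputable section

theorem mnAdd_eq_add {a b : EReal} (h₁ : a ≠ ⊥ ∨ b ≠ ⊤) (h₂ : a ≠ ⊤ ∨ b ≠ ⊥) :
    mnAdd a b = a + b := by
  rw [mnAdd, ← sub_eq_add_neg, ← EReal.neg_add h₁ h₂, neg_neg]

theorem add_coe_le_mnAdd_coe_iff {a b : EReal} (r : ℝ) : a + r ≤ mnAdd b r ↔ a ≤ b := by
  rw [mnAdd_eq_add (.inr (EReal.coe_ne_top r)) (.inr (EReal.coe_ne_bot r))]
  exact (EReal.addLECancellable_coe r).add_le_add_iff_right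

theorem add_le_mpMulVec {m n : ℕ} (A : Matrix (Fin m) (Fin n) EReal) (x : Fin n → EReal)
    (i : Fin m) (j : Fin n) : A i j + x j ≤ mpMulVec A x i :=
  le_iSup (fun k => A i k + x k) j

theorem mnMulVec_le_mnAdd {m n : ℕ} (A : Matrix (Fin m) (Fin n) EReal) (x : Fin n → EReal)
    (i : Fin m) (j : Fin n) : mnMulVec A x i ≤ mnAdd (A i j) (x j) :=
  iInf_le (fun k => mnAdd (A i k) (x k)) j

theorem entrywise_le_of_exists_general {m n : ℕ} {𝒜 ℬ : Matrix (Fin m) (Fin n) EReal}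
    {x : Fin n → EReal} {i : Fin m} {j : Fin n} {r : ℝ} (hxj : x j = r)
    (h : mpMulVec 𝒜 x i ≤ mnMulVec ℬ x i) : 𝒜 i j ≤ ℬ i j := by
  have hterm : 𝒜 i j + x j ≤ mnAdd (ℬ i j) (x j) :=
    calc
      𝒜 i j + x j ≤ mpMulVec 𝒜 x i := add_le_mpMulVec 𝒜 x i j
      _ ≤ mnMulVec ℬ x i := h
      _ ≤ mnAdd (ℬ i j) (x j) := mnMulVec_le_mnAdd ℬ x i j
  rw [hxj] at hterm
  exact (add_coe_le_mnAdd_coe_iff r).mp hterm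

/-- if `𝒜 ⊗ x ≤ ℬ ⊗' x` for some real vector `x`, then `𝒜 ≤ ℬ` entrywise. -/
theorem entrywise_le_of_exists {m n : ℕ} (𝒜 ℬ : Matrix (Fin m) (Fin n) EReal)
    (x : Fin n → EReal) (hxreal : ∀ i, ∃ r : ℝ, x i = (r : EReal))
    (h : mpMulVec 𝒜 x ≤ mnMulVec ℬ x) :
    ∀ i j, 𝒜 i j ≤ ℬ i j := by
  intro i j
  obtain ⟨r, hxj⟩ := hxreal j
  exact entrywise_le_of_exists_general hxj (h i)
end
end

section
/- Let B be a d×d matrix with entries in ℝ ∪ {-∞} such that all circuits of its weighted graph have nonpositive weight, i.e. (B^k)_{ii} ≤ 0 for every i and every k ∈ {1, …, d} (max-plus powers). Then the max-plus Kleene star of B is obtained after finitely many powers: B* = E ⊕ B ⊕ B^2 ⊕ ⋯ ⊕ B^{d-1}; in particular all entries of B* are smaller than +∞. -/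
/-!
The entry `(B^k)_{ij}` is the largest weight of a walk of length `k` from `i` to `j`. If `k ≥ d`,
then two of the first `d + 1` vertices of an optimal walk coincide, so the walk contains a circuit
of length between `1` and `d`, of nonpositive weight. Deleting it gives a shorter walk with the same
ends and at least the same weight. Hence every power is dominated entrywise by the powers of
exponent less than `d`.
-/

noncomputable section

/-- The weight of the walk `p 0 → p 1 → ⋯ → p n` in the graph on `V` with arc weights `A`. A walk is
encoded by an infinite sequence of vertices together with its length `n`; the vertices after time
`n` are irrelevant. -/
def walkWeight {V M : Type*} [AddCommMonoid M] (A : Matrix V V M) (p : ℕ → V) (n : ℕ) : M :=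
  ∑ t ∈ Finset.range n, A (p t) (p (t + 1))

section Walks

variable {V M : Type*} [AddCommMonoid M] (A : Matrix V V M) (p : ℕ → V)

lemma walkWeight_add (m n : ℕ) :
    walkWeight A p (m + n) = walkWeight A p m + walkWeight A (fun t => p (m + t)) n :=
  Finset.sum_range_add _ m n

lemma walkWeight_succ' (n : ℕ) :
    walkWeight A p (n + 1) = A (p 0) (p 1) + walkWeight A (fun t => p (t + 1)) n := by
  simp only [walkWeight, Finset.sum_range_succ', add_comm (A (p 0) (p 1)), zero_add]

end Walks

lemma exists_map_add_eq_of_fintype {V : Type*} [Fintype V] (p : ℕ → V) :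
    ∃ a n, 1 ≤ n ∧ a + n ≤ Fintype.card V ∧ p (a + n) = p a := by
  obtain ⟨s, t, hne, heq⟩ := Fintype.exists_ne_map_eq_of_card_lt
    (fun t : Fin (Fintype.card V + 1) => p t) (by simp)
  wlog hlt : s < t generalizing s t
  · exact this t s hne.symm heq.symm (hne.lt_or_gt.resolve_left hlt)
  refine ⟨s, t - s, by omega, by omega, ?_⟩
  rw [Nat.add_sub_of_le hlt.le]
  exact heq.symm

lemma iSup_lt_top_of_finite {ι α : Type*} [CompleteLinearOrder α] [Nontrivial α] [Finite ι]
    {f : ι → α} (hf : ∀ i, f i < ⊤) : ⨆ i, f i < ⊤ := by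
  cases isEmpty_or_nonempty ι
  · simp
  · obtain ⟨i, hi⟩ := exists_eq_ciSup_of_finite (f := f)
    exact hi ▸ hf i

section Products

variable {m n p : ℕ} (A : Matrix (Fin m) (Fin n) EReal) (B : Matrix (Fin n) (Fin p) EReal)

lemma add_le_mpMul (i : Fin m) (k : Fin n) (j : Fin p) : A i k + B k j ≤ mpMul A B i j :=
  le_iSup (fun k => A i k + B k j) k

lemma exists_mpMul_eq_add [NeZero n] (i : Fin m) (j : Fin p) :
    ∃ k, mpMul A B i j = A i k + B k j := by
  obtain ⟨k, hk⟩ := exists_eq_ciSup_of_finite (f := fun k => A i k + B k j)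
  exact ⟨k, hk.symm⟩

variable {A B}

lemma mpMul_lt_top {i : Fin m} {j : Fin p} (hA : ∀ k, A i k < ⊤) (hB : ∀ k, B k j < ⊤) :
    mpMul A B i j < ⊤ :=
  iSup_lt_top_of_finite fun k => EReal.add_lt_top (hA k).ne (hB k).ne

end Products

lemma mpMul_mpId {m n : ℕ} (A : Matrix (Fin m) (Fin n) EReal) : mpMul A (mpId n) = A := by
  ext i j
  refine le_antisymm (iSup_le fun k => ?_) ?_
  · obtain rfl | hkj := eq_or_ne k j <;> simp [mpId, *]
  · simpa [mpId] using add_le_mpMul A (mpId n) i j j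

section Powers

variable {d : ℕ} (B : Matrix (Fin d) (Fin d) EReal)

lemma mpPow_one : mpPow B 1 = B :=
  mpMul_mpId B

lemma add_le_mpPow_succ (k : ℕ) (i l j : Fin d) :
    B i l + mpPow B k l j ≤ mpPow B (k + 1) i j :=
  add_le_mpMul B (mpPow B k) i l j

lemma exists_mpPow_succ_eq_add (k : ℕ) (i j : Fin d) :
    ∃ l, mpPow B (k + 1) i j = B i l + mpPow B k l j :=
  have : NeZero d := ⟨i.pos.ne'⟩
  exists_mpMul_eq_add B (mpPow B k) i j

lemma mpPow_add_mpPow_le (a c : ℕ) (i l j : Fin d) :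
    mpPow B a i l + mpPow B c l j ≤ mpPow B (a + c) i j := by
  induction a generalizing i with
  | zero => obtain rfl | hil := eq_or_ne i l <;> simp [mpPow, mpId, *]
  | succ a ih =>
    obtain ⟨m, hm⟩ := exists_mpPow_succ_eq_add B a i l
    calc mpPow B (a + 1) i l + mpPow B c l j
        = B i m + (mpPow B a m l + mpPow B c l j) := by rw [hm, add_assoc]
      _ ≤ B i m + mpPow B (a + c) m j := by gcongr; exact ih m
      _ ≤ mpPow B (a + c + 1) i j := add_le_mpPow_succ B (a + c) i m j
      _ = mpPow B (a + 1 + c) i j := by rw [Nat.add_right_comm]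

lemma walkWeight_le_mpPow (p : ℕ → Fin d) (n : ℕ) :
    walkWeight B p n ≤ mpPow B n (p 0) (p n) := by
  induction n generalizing p with
  | zero => simp [walkWeight, mpPow, mpId]
  | succ n ih =>
    calc walkWeight B p (n + 1)
        = B (p 0) (p 1) + walkWeight B (fun t => p (t + 1)) n := walkWeight_succ' B p n
      _ ≤ B (p 0) (p 1) + mpPow B n (p 1) (p (n + 1)) := by gcongr; exact ih fun t => p (t + 1)
      _ ≤ mpPow B (n + 1) (p 0) (p (n + 1)) := add_le_mpPow_succ B n _ _ _

lemma exists_walkWeight_eq_mpPow {k : ℕ} {i j : Fin d} (hk : mpPow B k i j ≠ ⊥) :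
    ∃ p : ℕ → Fin d, p 0 = i ∧ p k = j ∧ walkWeight B p k = mpPow B k i j := by
  induction k generalizing i with
  | zero =>
    obtain rfl : i = j := by_contra fun hij => hk (if_neg hij)
    exact ⟨fun _ => i, rfl, rfl, by simp [walkWeight, mpPow, mpId]⟩
  | succ k ih =>
    obtain ⟨l, hl⟩ := exists_mpPow_succ_eq_add B k i j
    obtain ⟨p, rfl, hpk, hp⟩ := ih (EReal.add_ne_bot_iff.1 (hl ▸ hk)).2
    refine ⟨fun t => Nat.casesOn t i p, rfl, hpk, ?_⟩
    rw [hl, ← hp]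
    exact walkWeight_succ' B _ k

lemma walkWeight_le_mpPow_of_circuit (p : ℕ → Fin d) {a n : ℕ} (c : ℕ) (hp : p (a + n) = p a)
    (hn : mpPow B n (p a) (p a) ≤ 0) :
    walkWeight B p (a + n + c) ≤ mpPow B (a + c) (p 0) (p (a + n + c)) := by
  have hcircuit : walkWeight B (fun t => p (a + t)) n ≤ 0 :=
    (walkWeight_le_mpPow B (fun t => p (a + t)) n).trans (by simpa [hp] using hn)
  have htail : walkWeight B (fun t => p (a + n + t)) c ≤ mpPow B c (p a) (p (a + n + c)) := by
    simpa [hp] using walkWeight_le_mpPow B (fun t => p (a + n + t)) c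
  calc walkWeight B p (a + n + c)
      = walkWeight B p a + walkWeight B (fun t => p (a + t)) n
          + walkWeight B (fun t => p (a + n + t)) c := by rw [walkWeight_add, walkWeight_add]
    _ ≤ mpPow B a (p 0) (p a) + 0 + mpPow B c (p a) (p (a + n + c)) := by
        gcongr
        exact walkWeight_le_mpPow B p a
    _ ≤ mpPow B (a + c) (p 0) (p (a + n + c)) := by
        rw [add_zero]
        exact mpPow_add_mpPow_le B a c _ _ _

lemma mpPow_le_mpStar (k : ℕ) (i j : Fin d) : mpPow B k i j ≤ mpStar B i j :=
  le_iSup (fun k => mpPow B k i j) k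

lemma le_mpStar (i j : Fin d) : B i j ≤ mpStar B i j := by
  simpa only [mpPow_one] using mpPow_le_mpStar B 1 i j

variable {B}

lemma mpPow_lt_top (hB : ∀ i j, B i j < ⊤) (k : ℕ) (i j : Fin d) : mpPow B k i j < ⊤ := by
  induction k generalizing i with
  | zero => by_cases hij : i = j <;> simp [mpPow, mpId, hij]
  | succ k ih => exact mpMul_lt_top (hB i) ih

section NonposCircuits

variable (hcirc : ∀ i : Fin d, ∀ k : ℕ, 1 ≤ k → k ≤ d → mpPow B k i i ≤ 0)
include hcirc

lemma exists_lt_mpPow_le_of_le {k : ℕ} (hk : d ≤ k) (i j : Fin d) :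
    ∃ l < k, mpPow B k i j ≤ mpPow B l i j := by
  obtain hbot | hbot := eq_or_ne (mpPow B k i j) ⊥
  · exact ⟨0, i.pos.trans_le hk, hbot ▸ bot_le⟩
  obtain ⟨p, rfl, rfl, hp⟩ := exists_walkWeight_eq_mpPow B hbot
  obtain ⟨a, n, hn, han, hpa⟩ := exists_map_add_eq_of_fintype p
  rw [Fintype.card_fin] at han
  obtain ⟨c, rfl⟩ := Nat.exists_eq_add_of_le (han.trans hk)
  refine ⟨a + c, by omega, hp ▸ ?_⟩
  exact walkWeight_le_mpPow_of_circuit B p c hpa (hcirc (p a) n hn (by omega))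

lemma mpPow_le_iSup_fin (k : ℕ) (i j : Fin d) :
    mpPow B k i j ≤ ⨆ l : Fin d, mpPow B (l : ℕ) i j := by
  induction k using Nat.strong_induction_on with
  | _ k ih =>
    obtain hk | hk := lt_or_ge k d
    · exact le_iSup (fun l : Fin d => mpPow B (l : ℕ) i j) ⟨k, hk⟩
    · obtain ⟨l, hlk, hle⟩ := exists_lt_mpPow_le_of_le hcirc hk i j
      exact hle.trans (ih l hlk)

lemma mpStar_eq_iSup_fin (i j : Fin d) : mpStar B i j = ⨆ l : Fin d, mpPow B (l : ℕ) i j :=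
  le_antisymm (iSup_le fun k => mpPow_le_iSup_fin hcirc k i j)
    (iSup_le fun l => mpPow_le_mpStar B l i j)

end NonposCircuits

end Powers

theorem star_finite_of_nonpos_circuits_general {d : ℕ} (B : Matrix (Fin d) (Fin d) EReal)
    (hcirc : ∀ i : Fin d, ∀ k : ℕ, 1 ≤ k → k ≤ d → mpPow B k i i ≤ 0) :
    (∀ i j, mpStar B i j = ⨆ k : Fin d, mpPow B (k : ℕ) i j) ∧
      ((∀ i j, mpStar B i j < ⊤) ↔ ∀ i j, B i j < ⊤) := by
  refine ⟨mpStar_eq_iSup_fin hcirc, fun hstar i j => ?_, fun hB i j => ?_⟩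
  · exact (le_mpStar B i j).trans_lt (hstar i j)
  · rw [mpStar_eq_iSup_fin hcirc]
    exact iSup_lt_top_of_finite fun k => mpPow_lt_top hB k i j

/-- if all circuits of `B` have nonpositive weight then
`B* = E ⊕ B ⊕ ⋯ ⊕ B^{d-1}` and all entries of `B*` are `< +∞`. -/
theorem star_finite_of_nonpos_circuits {d : ℕ} (B : Matrix (Fin d) (Fin d) EReal)
    (hB : ∀ i j, B i j ≠ ⊤)
    (hcirc : ∀ i : Fin d, ∀ k : ℕ, 1 ≤ k → k ≤ d → mpPow B k i i ≤ 0) :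
    (∀ i j, mpStar B i j = ⨆ k : Fin d, mpPow B (k : ℕ) i j) ∧
      (∀ i j, mpStar B i j < ⊤) :=
  (star_finite_of_nonpos_circuits_general B hcirc).imp_right fun hfinite =>
    hfinite.2 fun i j => (hB i j).lt_top
end
end
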